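/- (Trading an ancilla qubit for an ebit.) Let n, k, c, d be integers with n ≥ 1 and c < n − k, and suppose S ⊆ V_n is an F₂-subspace with dim S = n−k+c, dim(S ∩ S^⊥) = n−k−c, and every element of S^⊥ \ (S ∩ S^⊥) has Pauli weight at least d. Then there exists an F₂-subspace S' ⊆ V_n with dim S' = n−k+(c+1), dim(S' ∩ S'^⊥) = n−k−(c+1), and every element of S'^⊥ \ (S' ∩ S'^⊥) has Pauli weight at least d. That is, the existence of an [[n,k,d;c]] EAQEC code with c < n−k implies the existence of an [[n,k,d';c+1]] EAQEC code with d' ≥ d. -/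

import Mathlib

open Finset

/-- The binary symplectic space modelling `n`-qubit Pauli operators modulo phases. -/
abbrev V (n : ℕ) := (Fin n → ZMod 2) × (Fin n → ZMod 2)

/-- The Pauli weight of `v = (x, z)`: the number of indices where `(x i, z i) ≠ (0,0)`. -/
def wt {n : ℕ} (v : V n) : ℕ :=
  (Finset.univ.filter fun i => ¬(v.1 i = 0 ∧ v.2 i = 0)).card

/-- The binary symplectic product. -/
def sympl {n : ℕ} (u v : V n) : ZMod 2 :=
  ∑ i, (u.1 i * v.2 i + u.2 i * v.1 i)

lemma sympl_add_left {n : ℕ} (a b w : V n) :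
    sympl (a + b) w = sympl a w + sympl b w := by
  simp only [sympl, Prod.fst_add, Prod.snd_add, Pi.add_apply, ← Finset.sum_add_distrib]
  exact Finset.sum_congr rfl fun i _ => by ring

lemma sympl_smul_left {n : ℕ} (c : ZMod 2) (a w : V n) :
    sympl (c • a) w = c * sympl a w := by
  simp only [sympl, Prod.smul_fst, Prod.smul_snd, Pi.smul_apply, smul_eq_mul,
    Finset.mul_sum]
  exact Finset.sum_congr rfl fun i _ => by ring

/-- The symplectic dual `W^⊥` of a subspace `W ⊆ V n`. -/
def sdual {n : ℕ} (W : Submodule (ZMod 2) (V n)) : Submodule (ZMod 2) (V n) where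
  carrier := {u | ∀ w ∈ W, sympl u w = 0}
  add_mem' := fun ha hb w hw => by
    rw [sympl_add_left, ha w hw, hb w hw, add_zero]
  zero_mem' := fun w hw => by simp [sympl]
  smul_mem' := fun c a ha w hw => by rw [sympl_smul_left, ha w hw, mul_zero]

open scoped Classical

/-
Let `g ≠ 0` lie in the radical of `S`, and choose `v` with `B g v ≠ 0` by nondegeneracy; adjoin `v`
to `S`. Since `B g` vanishes on `S` but not at `v`, no vector outside `S` enters the radical, while
the new condition `B v u = 0` removes `g` from it: the dimension of the space goes up by one and
that of the radical goes down by one. Since `S^⊥ \ (S ∩ S^⊥) = S^⊥ \ S`, enlarging `S` creates no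
new undetectable error.
-/

section Submodule

variable {K M : Type*} [Field K] [AddCommGroup M] [Module K M]
  {p : Submodule K M} {f : Module.Dual K M}

lemma sup_span_singleton_inf_ker {v : M} (hp : p ≤ LinearMap.ker f) (hv : f v ≠ 0) :
    (p ⊔ Submodule.span K {v}) ⊓ LinearMap.ker f = p := by
  have hdisj : Disjoint (LinearMap.ker f) (Submodule.span K {v}) :=
    Submodule.disjoint_span_singleton_of_notMem hv
  rw [sup_inf_assoc_of_le _ hp, hdisj.symm.eq_bot, sup_bot_eq]

lemma finrank_inf_ker_add_one [FiniteDimensional K p] (hf : ¬p ≤ LinearMap.ker f) :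
    Module.finrank K (p ⊓ LinearMap.ker f : Submodule K M) + 1 = Module.finrank K p := by
  have hne : f.domRestrict p ≠ 0 := by
    rwa [Ne, ← LinearMap.ker_eq_top, LinearMap.ker_domRestrict, Submodule.comap_subtype_eq_top]
  rw [← Module.Dual.finrank_ker_add_one_of_ne_zero hne, LinearMap.ker_domRestrict,
    ← Submodule.finrank_map_subtype_eq, Submodule.map_comap_subtype]

end Submodule

section Orthogonal

open LinearMap (BilinForm)

lemma orthogonal_sup {R M : Type*} [CommSemiring R] [AddCommMonoid M] [Module R M]
    (B : BilinForm R M) (p q : Submodule R M) :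
    B.orthogonal (p ⊔ q) = B.orthogonal p ⊓ B.orthogonal q := by
  refine le_antisymm
    (le_inf (B.orthogonal_le le_sup_left) (B.orthogonal_le le_sup_right)) ?_
  rintro u ⟨hp, hq⟩
  have hsup : p ⊔ q ≤ LinearMap.ker (B.flip u) := sup_le hp hq
  exact hsup

/-- The errors that commute with every element of `W` without lying in the radical of `W`: those
which the code given by `W` cannot detect although they act nontrivially on it. Its minimum distance
is the least weight of such an error. -/
def undetectableErrors {R M : Type*} [CommSemiring R] [AddCommMonoid M] [Module R M]
    (B : BilinForm R M) (W : Submodule R M) : Set M :=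
  {u | u ∈ B.orthogonal W ∧ u ∉ W ⊓ B.orthogonal W}

lemma undetectableErrors_antitone {R M : Type*} [CommSemiring R] [AddCommMonoid M] [Module R M]
    (B : BilinForm R M) : Antitone (undetectableErrors B) :=
  fun _ _ hle _ hu => ⟨B.orthogonal_le hle hu.1, fun hrad => hu.2 ⟨hle hrad.1, hu.1⟩⟩

variable {K M : Type*} [Field K] [AddCommGroup M] [Module K M] {B : BilinForm K M}
  {W : Submodule K M} {g v : M}

lemma orthogonal_sup_span_singleton :
    B.orthogonal (W ⊔ Submodule.span K {v}) = B.orthogonal W ⊓ LinearMap.ker (B v) := by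
  rw [orthogonal_sup]
  exact congrArg _ (LinearMap.orthogonal_span_singleton_eq_to_lin_ker v)

lemma radical_sup_span_singleton (hB : B.IsRefl) (hg : g ∈ W ⊓ B.orthogonal W)
    (hgv : B g v ≠ 0) :
    (W ⊔ Submodule.span K {v}) ⊓ B.orthogonal (W ⊔ Submodule.span K {v}) =
      W ⊓ B.orthogonal W ⊓ LinearMap.ker (B v) := by
  set W' := W ⊔ Submodule.span K {v} with hW'
  have hW : W ≤ LinearMap.ker (B g) := fun w hw => hB _ _ (hg.2 w hw)
  have horth : B.orthogonal W' ≤ LinearMap.ker (B g) :=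
    fun _ hu => hu g (Submodule.mem_sup_left hg.1)
  calc W' ⊓ B.orthogonal W'
      = W' ⊓ LinearMap.ker (B g) ⊓ B.orthogonal W' := by
        rw [inf_assoc, inf_eq_right.mpr horth]
    _ = W ⊓ (B.orthogonal W ⊓ LinearMap.ker (B v)) := by
        rw [hW', sup_span_singleton_inf_ker hW hgv, orthogonal_sup_span_singleton]
    _ = W ⊓ B.orthogonal W ⊓ LinearMap.ker (B v) := (inf_assoc _ _ _).symm

lemma finrank_radical_sup_span_singleton_add_one [FiniteDimensional K W] (hB : B.IsRefl)
    (hg : g ∈ W ⊓ B.orthogonal W) (hgv : B g v ≠ 0) :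
    Module.finrank K ((W ⊔ Submodule.span K {v}) ⊓
        B.orthogonal (W ⊔ Submodule.span K {v}) : Submodule K M) + 1 =
      Module.finrank K (W ⊓ B.orthogonal W : Submodule K M) := by
  rw [radical_sup_span_singleton hB hg hgv]
  exact finrank_inf_ker_add_one fun hle => hgv (hB _ _ (hle hg))

theorem EAQEC_trade_ancilla_for_ebit_general [FiniteDimensional K M] (hB : B.IsRefl)
    (hsep : B.SeparatingLeft) (hrad : W ⊓ B.orthogonal W ≠ ⊥) :
    ∃ W' : Submodule K M,
      Module.finrank K W' = Module.finrank K W + 1 ∧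
      Module.finrank K (W' ⊓ B.orthogonal W' : Submodule K M) + 1 =
        Module.finrank K (W ⊓ B.orthogonal W : Submodule K M) ∧
      undetectableErrors B W' ⊆ undetectableErrors B W := by
  obtain ⟨g, hg, hg0⟩ := Submodule.exists_mem_ne_zero_of_ne_bot hrad
  obtain ⟨v, hgv⟩ : ∃ v, B g v ≠ 0 := by
    by_contra! h
    exact hg0 (hsep g h)
  have hv : v ∉ W := fun hv => hgv (hB _ _ (hg.2 v hv))
  exact ⟨W ⊔ Submodule.span K {v}, Submodule.finrank_sup_span_singleton hv,
    finrank_radical_sup_span_singleton_add_one hB hg hgv,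
    undetectableErrors_antitone B le_sup_left⟩

end Orthogonal

section SymplForm

variable {n : ℕ}

lemma sympl_comm (u v : V n) : sympl u v = sympl v u :=
  Finset.sum_congr rfl fun _ _ => by ring

/-- The symplectic product `sympl` as a bilinear form, whose orthogonal complements are `sdual`. -/
def symplForm (n : ℕ) : LinearMap.BilinForm (ZMod 2) (V n) :=
  LinearMap.mk₂ (ZMod 2) sympl sympl_add_left sympl_smul_left
    (fun u v w => by simp only [sympl_comm u, sympl_add_left])
    (fun a u v => by simp only [sympl_comm u, sympl_smul_left, smul_eq_mul])

lemma symplForm_isRefl : (symplForm n).IsRefl :=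
  fun u v h => (sympl_comm v u).trans h

lemma symplForm_separatingLeft : (symplForm n).SeparatingLeft := by
  intro u hu
  refine Prod.ext (funext fun i => ?_) (funext fun i => ?_)
  · simpa [symplForm, sympl, Pi.single_apply] using hu (0, Pi.single i 1)
  · simpa [symplForm, sympl, Pi.single_apply] using hu (Pi.single i 1, 0)

lemma sdual_eq_orthogonal (W : Submodule (ZMod 2) (V n)) :
    sdual W = (symplForm n).orthogonal W :=
  Submodule.ext fun u => forall₂_congr fun w _ => by
    rw [sympl_comm]
    rfl

end SymplForm

/-- Trading an ancilla qubit for an ebit: an `[[n,k,d;c]]` EAQEC code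
with `c < n − k` yields an `[[n,k,d';c+1]]` EAQEC code with `d' ≥ d`. -/
theorem EAQEC_trade_ancilla_for_ebit (n k c d : ℕ) (hn : 1 ≤ n) (hc : c + k < n)
    (S : Submodule (ZMod 2) (V n))
    (hdim : Module.finrank (ZMod 2) S + k = n + c)
    (hrad : Module.finrank (ZMod 2) (S ⊓ sdual S : Submodule (ZMod 2) (V n)) + k + c = n)
    (hdist : ∀ v ∈ sdual S, v ∉ (S ⊓ sdual S : Submodule (ZMod 2) (V n)) → d ≤ wt v) :
    ∃ S' : Submodule (ZMod 2) (V n),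
      Module.finrank (ZMod 2) S' + k = n + (c + 1) ∧
      Module.finrank (ZMod 2) (S' ⊓ sdual S' : Submodule (ZMod 2) (V n)) + k + (c + 1)
        = n ∧
      ∀ v ∈ sdual S', v ∉ (S' ⊓ sdual S' : Submodule (ZMod 2) (V n)) → d ≤ wt v := by
  rw [sdual_eq_orthogonal] at hrad hdist
  have hrad_ne : S ⊓ (symplForm n).orthogonal S ≠ ⊥ := fun hbot => by
    rw [hbot, finrank_bot] at hrad
    omega
  obtain ⟨S', hdim', hrad', herr⟩ :=
    EAQEC_trade_ancilla_for_ebit_general symplForm_isRefl symplForm_separatingLeft hrad_ne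
  rw [← sdual_eq_orthogonal S'] at hrad'
  refine ⟨S', by omega, by omega, fun v hv hv_rad => ?_⟩
  rw [sdual_eq_orthogonal] at hv hv_rad
  obtain ⟨hv_orth, hv_notMem⟩ := herr ⟨hv, hv_rad⟩
  exact hdist v hv_orth hv_notMem
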